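/- arXiv:2008.08830 — 5 statements merged into one kernel-verified Lean document; each statement's English description precedes it below -/
import Mathlib

section
/- Let S be a finite state space with transition rates r(s,s') ≥ 0 for s ≠ s' (and r(s,s) = 0), let π be a stationary distribution, and let V : S → [0,∞). Define ν_max = max over pairs s,s' with r(s,s') > 0 of |V(s) − V(s')|, and f_max = max(0, max_{s∈S} ∑_{s' : V(s') > V(s)} r(s,s')·(V(s') − V(s))). Let E ⊆ S, and suppose there exist B > 0, γ > 0 and ξ ≥ 0 such that: (1) GV(s) ≤ −γ whenever V(s) ≥ B and s ∈ E; (2) GV(s) ≤ ξ whenever V(s) ≥ B and s ∉ E. Then for every positive integer j, the stationary probability satisfies π({s : V(s) ≥ B + 2 ν_max j}) ≤ (f_max/(f_max + γ))^j + (ξ/γ + 1)·π({s : s ∉ E}). -/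
open scoped Classical

/-!
Under a stationary distribution every function has mean drift zero; apply this to the Lyapunov
function truncated at a level `c`, that is, to `max c V`. Jumps change `V` by at most `ν`, so this
drift vanishes where `V < c - ν`, is at most the upward drift bound `f` in the window around `c`,
and is the drift of `V` itself where `c + ν ≤ V`. Taking means yields
`(f + γ) π(V ≥ c + ν) ≤ f π(V ≥ c - ν) + (γ + ξ) π(Eᶜ)`, a recursion with fixed point
`(ξ / γ + 1) π(Eᶜ)` that contracts by `f / (f + γ)` each time the level rises by `2 ν`.
-/

namespace MarkovChain

variable {S : Type*} [Fintype S] {r : S → S → ℝ} {μ V W : S → ℝ} {E : Set S}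
  {s : S} {B c f γ ν ξ : ℝ}

/-- The generator of the continuous-time Markov chain with rates `r`, applied to the observable `V`.
The diagonal of `r` is irrelevant. -/
def generator (r : S → S → ℝ) (V : S → ℝ) (s : S) : ℝ :=
  ∑ s', r s s' * (V s' - V s)

/-- The balance equations for the rates `r`: what flows out of each state flows in. The measure
is encoded by its point masses, which may be negative and need not sum to `1`. -/
def IsInvariant (r : S → S → ℝ) (μ : S → ℝ) : Prop :=
  ∀ s, μ s * ∑ s', r s s' = ∑ s', μ s' * r s' s

/-- The part of the drift of `V` at `s` that is due to the jumps increasing `V`. -/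
noncomputable def upwardDrift (r : S → S → ℝ) (V : S → ℝ) (s : S) : ℝ :=
  ∑ s' with V s < V s', r s s' * (V s' - V s)

theorem IsInvariant.sum_mul_generator_eq_zero (hμ : IsInvariant r μ) (V : S → ℝ) :
    ∑ s, μ s * generator r V s = 0 :=
  calc ∑ s, μ s * generator r V s
      = ∑ s, ∑ s', (μ s * r s s' * V s' - μ s * r s s' * V s) := by
        simp only [generator, Finset.mul_sum, mul_sub, mul_assoc]
    _ = ∑ s', (∑ s, μ s * r s s') * V s' - ∑ s, (μ s * ∑ s', r s s') * V s := by
        simp only [Finset.sum_sub_distrib, Finset.mul_sum, Finset.sum_mul]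
        rw [Finset.sum_comm]
    _ = 0 := by simp only [hμ _, sub_self]

theorem generator_congr (h : ∀ s', r s s' ≠ 0 → V s' - V s = W s' - W s) :
    generator r V s = generator r W s :=
  Finset.sum_congr rfl fun s' _ ↦ mul_eq_mul_left_iff.2 <| or_iff_not_imp_right.2 (h s')

theorem generator_max_of_add_le (hjump : ∀ s', r s s' ≠ 0 → |V s - V s'| ≤ ν) (hs : c + ν ≤ V s) :
    generator r (fun t ↦ max c (V t)) s = generator r V s :=
  generator_congr fun s' hs' ↦ by
    have := abs_le.1 (hjump s' hs')
    rw [max_eq_right (by linarith), max_eq_right (by linarith)]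

theorem generator_max_of_le_sub (hjump : ∀ s', r s s' ≠ 0 → |V s - V s'| ≤ ν) (hs : V s ≤ c - ν) :
    generator r (fun t ↦ max c (V t)) s = 0 :=
  Finset.sum_eq_zero fun s' _ ↦ mul_eq_zero.2 <| or_iff_not_imp_left.2 fun hs' ↦ by
    have := abs_le.1 (hjump s' hs')
    beta_reduce
    rw [max_eq_left (by linarith), max_eq_left (by linarith), sub_self]

theorem generator_max_le_upwardDrift (hr : ∀ s', 0 ≤ r s s') (c : ℝ) :
    generator r (fun t ↦ max c (V t)) s ≤ upwardDrift r V s := by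
  rw [generator, upwardDrift, Finset.sum_filter]
  refine Finset.sum_le_sum fun s' _ ↦ ?_
  split_ifs with hup
  · have : max c (V s') - max c (V s) ≤ V s' - V s := by grind
    exact mul_le_mul_of_nonneg_left this (hr s')
  · have : max c (V s') ≤ max c (V s) := max_le_max_left c (not_lt.1 hup)
    exact mul_nonpos_of_nonneg_of_nonpos (hr s') (sub_nonpos.2 this)

theorem generator_max_le (hr : ∀ s', 0 ≤ r s s')
    (hjump : ∀ s', r s s' ≠ 0 → |V s - V s'| ≤ ν) (hν : 0 ≤ ν) (hf : upwardDrift r V s ≤ f)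
    (hγξ : 0 ≤ γ + ξ) (hE : c + ν ≤ V s → s ∈ E → generator r V s ≤ -γ)
    (hEc : c + ν ≤ V s → s ∉ E → generator r V s ≤ ξ) :
    generator r (fun t ↦ max c (V t)) s ≤
      (if c - ν ≤ V s then f else 0) - (if c + ν ≤ V s then f + γ else 0)
        + (if s ∉ E then γ + ξ else 0) := by
  by_cases hhigh : c + ν ≤ V s
  · rw [generator_max_of_add_le hjump hhigh, if_pos hhigh, if_pos (by linarith)]
    by_cases hs : s ∈ E
    · rw [if_neg (not_not.2 hs)]
      linarith [hE hhigh hs]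
    · rw [if_pos hs]
      linarith [hEc hhigh hs]
  · have hexc : 0 ≤ if s ∉ E then γ + ξ else 0 := ite_nonneg hγξ le_rfl
    rw [if_neg hhigh]
    by_cases hwindow : c - ν ≤ V s
    · rw [if_pos hwindow]
      linarith [generator_max_le_upwardDrift (V := V) hr c]
    · rw [if_neg hwindow, generator_max_of_le_sub hjump (not_le.1 hwindow).le]
      linarith

theorem IsInvariant.add_mul_tail_le
    (hμ : IsInvariant r μ) (hr : ∀ s s', 0 ≤ r s s') (hμ₀ : ∀ s, 0 ≤ μ s)
    (hjump : ∀ s s', r s s' ≠ 0 → |V s - V s'| ≤ ν) (hν : 0 ≤ ν) (hf : ∀ s, upwardDrift r V s ≤ f)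
    (hE : ∀ s, B ≤ V s → s ∈ E → generator r V s ≤ -γ)
    (hEc : ∀ s, B ≤ V s → s ∉ E → generator r V s ≤ ξ)
    (hγξ : 0 ≤ γ + ξ) (hc : B ≤ c + ν) :
    (f + γ) * ∑ s with c + ν ≤ V s, μ s ≤
      f * ∑ s with c - ν ≤ V s, μ s + (γ + ξ) * ∑ s with s ∉ E, μ s := by
  have hdrift := Finset.sum_le_sum fun s (_ : s ∈ Finset.univ) ↦
    mul_le_mul_of_nonneg_left
      (generator_max_le (hr s) (hjump s) hν (hf s) hγξ
        (fun hs ↦ hE s (hc.trans hs)) (fun hs ↦ hEc s (hc.trans hs)))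
      (hμ₀ s)
  rw [hμ.sum_mul_generator_eq_zero] at hdrift
  simp only [mul_add, mul_sub, mul_ite, mul_zero, Finset.sum_add_distrib,
    Finset.sum_sub_distrib, ← Finset.sum_filter, ← Finset.sum_mul] at hdrift
  linarith

theorem IsInvariant.tail_le_pow_mul_add
    (hμ : IsInvariant r μ) (hr : ∀ s s', 0 ≤ r s s') (hμ₀ : ∀ s, 0 ≤ μ s)
    (hjump : ∀ s s', r s s' ≠ 0 → |V s - V s'| ≤ ν) (hν : 0 ≤ ν) (hf : ∀ s, upwardDrift r V s ≤ f)
    (hE : ∀ s, B ≤ V s → s ∈ E → generator r V s ≤ -γ)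
    (hEc : ∀ s, B ≤ V s → s ∉ E → generator r V s ≤ ξ)
    (hf₀ : 0 ≤ f) (hγ : 0 < γ) (hξ : 0 ≤ ξ) (j : ℕ) :
    ∑ s with B + 2 * ν * j ≤ V s, μ s ≤
      (f / (f + γ)) ^ j * ∑ s, μ s + (ξ / γ + 1) * ∑ s with s ∉ E, μ s := by
  set tail : ℕ → ℝ := fun n ↦ ∑ s with B + 2 * ν * n ≤ V s, μ s
  set k := (ξ / γ + 1) * ∑ s with s ∉ E, μ s with hk
  have hρ : 0 ≤ f / (f + γ) := by positivity
  have hk₀ : 0 ≤ k := mul_nonneg (by positivity) (Finset.sum_nonneg fun s _ ↦ hμ₀ s)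
  have hstep (n : ℕ) : tail (n + 1) - k ≤ f / (f + γ) * (tail n - k) := by
    have hc : B ≤ B + 2 * ν * n + ν + ν := by
      have : 0 ≤ ν * n := by positivity
      linarith
    have hlevel : B + 2 * ν * n + ν + ν = B + 2 * ν * (n + 1 : ℕ) := by push_cast; ring
    have hrec := hμ.add_mul_tail_le hr hμ₀ hjump hν hf hE hEc (by positivity) hc
    rw [hlevel, add_sub_cancel_right] at hrec
    have hfixed : (γ + ξ) * ∑ s with s ∉ E, μ s = γ * k := by rw [hk]; field_simp; ring
    rw [div_mul_eq_mul_div, le_div_iff₀' (by positivity)]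
    linarith
  have htail₀ : tail 0 ≤ ∑ s, μ s :=
    Finset.sum_le_univ_sum_of_nonneg hμ₀
  calc tail j = tail j - k + k := (sub_add_cancel _ _).symm
    _ ≤ (f / (f + γ)) ^ j * (tail 0 - k) + k := by
      gcongr
      exact le_geom (u := fun n ↦ tail n - k) hρ j fun n _ ↦ hstep n
    _ ≤ (f / (f + γ)) ^ j * ∑ s, μ s + k := by
      gcongr
      linarith

end MarkovChain

/-- The geometric tail bound with an exceptional set (Lemma 5.7): if the Lyapunov
function `V` has drift at most `-γ` on the exceptional-set complement whenever
`V ≥ B`, and drift at most `ξ` otherwise, then the stationary probability that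
`V ≥ B + 2 νmax j` decays geometrically in `j` up to the probability of the
exceptional set. -/
theorem stmt_3 {S : Type*} [Fintype S] (r : S → S → ℝ)
    (hr : ∀ s s', s ≠ s' → 0 ≤ r s s') (hdiag : ∀ s, r s s = 0)
    (pr : S → ℝ) (hpr0 : ∀ s, 0 ≤ pr s) (hpr1 : ∑ s, pr s = 1)
    (hbal : ∀ s, pr s * ∑ s', r s s' = ∑ s', pr s' * r s' s)
    (V : S → ℝ) (hV : ∀ s, 0 ≤ V s)
    (νmax fmax : ℝ)
    (hν : νmax = sSup ((fun p : S × S => |V p.1 - V p.2|) '' {p | 0 < r p.1 p.2}))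
    (hf : fmax = max 0 (⨆ s : S, ∑ s' ∈ Finset.univ.filter (fun s' => V s < V s'),
        r s s' * (V s' - V s)))
    (E : Set S) (B γ ξ : ℝ) (hB : 0 < B) (hγ : 0 < γ) (hξ : 0 ≤ ξ)
    (hdrift1 : ∀ s, B ≤ V s → s ∈ E → ∑ s', r s s' * (V s' - V s) ≤ -γ)
    (hdrift2 : ∀ s, B ≤ V s → s ∉ E → ∑ s', r s s' * (V s' - V s) ≤ ξ)
    (j : ℕ) (hj : 1 ≤ j) :
    ∑ s ∈ Finset.univ.filter (fun s => B + 2 * νmax * j ≤ V s), pr s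
      ≤ (fmax / (fmax + γ)) ^ j
        + (ξ / γ + 1) * ∑ s ∈ Finset.univ.filter (fun s => s ∉ E), pr s := by
  have hrate (s s') : 0 ≤ r s s' := by
    rcases eq_or_ne s s' with rfl | hne
    · exact (hdiag s).ge
    · exact hr s s' hne
  have hjump (s s') (hs : r s s' ≠ 0) : |V s - V s'| ≤ νmax :=
    hν ▸ le_csSup (Set.toFinite _).bddAbove ⟨(s, s'), (hrate s s').lt_of_ne' hs, rfl⟩
  have hν₀ : 0 ≤ νmax :=
    hν ▸ Real.sSup_nonneg (Set.forall_mem_image.2 fun _ _ ↦ abs_nonneg _)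
  have hup (s) : MarkovChain.upwardDrift r V s ≤ fmax :=
    hf ▸ (le_ciSup (Set.finite_range (MarkovChain.upwardDrift r V)).bddAbove s).trans
      (le_max_right _ _)
  have hinv : MarkovChain.IsInvariant r pr := hbal
  simpa only [hpr1, mul_one] using
    hinv.tail_le_pow_mul_add hrate hpr0 hjump hν₀ hup hdrift1 hdrift2 (hf ▸ le_max_left _ _) hγ hξ j
end

section
/- Let S be a finite state space with transition rates r(s,s') ≥ 0 for s ≠ s' (and r(s,s) = 0), let π be a stationary distribution, and let V : S → [0,∞). Define ν_max = max over pairs s,s' with r(s,s') > 0 of |V(s) − V(s')|, and f_max = max(0, max_{s∈S} ∑_{s' : V(s') > V(s)} r(s,s')·(V(s') − V(s))). Suppose there exist B > 0 and γ with 0 < γ ≤ f_max such that GV(s) ≤ −γ whenever V(s) ≥ B. Then for every positive integer j, π({s : V(s) ≥ B + 2 ν_max j}) ≤ exp(−j γ/(2 f_max)). -/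
open scoped Classical

/-!
Under the stationary law the generator of any function has mean zero. Apply this to the truncation
`max V c`: the truncation is locally constant below level `c - ν`, its drift is at most `f`
everywhere, and above level `c + ν` it has the drift of `V`, which is at most `-γ`. Hence
`(f + γ) π(V ≥ c + ν) ≤ f π(V ≥ c - ν)`, so each raise of the level by `2 ν` costs a factor
`f / (f + γ) = (1 + γ / f)⁻¹ ≤ exp (-γ / (2 f))`.
-/

namespace CTMC

variable {S R : Type*} [Fintype S]

section Generator

variable [Ring R] {r : S → S → R} {π : S → R}

/-- The generator `GV` of the continuous-time Markov chain with transition rates `r`; the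
term `s' = s` vanishes, so the sum runs over all states. -/
def generator (r : S → S → R) (V : S → R) (s : S) : R :=
  ∑ s', r s s' * (V s' - V s)

/-- The global balance equations for the weights `π`: the flow out of each state equals the flow
into it. Positivity and normalization are not included. -/
def IsStationary (r : S → S → R) (π : S → R) : Prop :=
  ∀ s, π s * ∑ s', r s s' = ∑ s', π s' * r s' s

theorem generator_const (r : S → S → R) (c : R) (s : S) : generator r (fun _ ↦ c) s = 0 := by
  simp [generator]

theorem generator_congr {V W : S → R} {s : S} (hs : V s = W s)
    (h : ∀ s', r s s' ≠ 0 → V s' = W s') : generator r V s = generator r W s := by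
  refine Finset.sum_congr rfl fun s' _ ↦ ?_
  by_cases hr : r s s' = 0
  · simp [hr]
  · rw [hs, h s' hr]

theorem IsStationary.sum_mul_generator_eq_zero (hπ : IsStationary r π) (V : S → R) :
    ∑ s, π s * generator r V s = 0 := by
  have inflow : ∑ s, ∑ s', π s * r s s' * V s' = ∑ s, (∑ s', π s' * r s' s) * V s := by
    simp only [Finset.sum_mul]
    exact Finset.sum_comm
  calc ∑ s, π s * generator r V s
      = ∑ s, ∑ s', π s * r s s' * V s' - ∑ s, (π s * ∑ s', r s s') * V s := by
        simp only [generator, Finset.mul_sum, Finset.sum_mul, ← Finset.sum_sub_distrib, mul_sub,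
          mul_assoc]
    _ = 0 := by simp only [inflow, hπ _, sub_self]

end Generator

section Drift

variable [CommRing R] [LinearOrder R] {r : S → S → R} {π V : S → R} {s : S} {c ν f γ : R}

/-- The rate at which upward jumps out of `s` increase `V`; its maximum over `s` is the paper's
`f_max`. -/
def upwardDrift (r : S → S → R) (V : S → R) (s : S) : R :=
  ∑ s' with V s < V s', r s s' * (V s' - V s)

/-- The mass `π {s | b ≤ V s}` of a superlevel set of `V`. -/
def tailMass (π V : S → R) (b : R) : R :=
  ∑ s with b ≤ V s, π s

theorem tailMass_eq_sum_mul_ite (π V : S → R) (b : R) :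
    tailMass π V b = ∑ s, π s * (if b ≤ V s then 1 else 0) := by
  simp only [tailMass, Finset.sum_filter, mul_ite, mul_one, mul_zero]

variable [IsStrictOrderedRing R]

theorem generator_max_eq_zero (hν : ∀ s', r s s' ≠ 0 → |V s - V s'| ≤ ν) (hν₀ : 0 ≤ ν)
    (hs : V s ≤ c - ν) : generator r (fun x ↦ max (V x) c) s = 0 := by
  rw [← generator_const r c s]
  refine generator_congr (max_eq_right (by linarith)) fun s' hr ↦ max_eq_right ?_
  linarith [neg_le_of_abs_le (hν s' hr)]

theorem generator_max_eq_generator (hν : ∀ s', r s s' ≠ 0 → |V s - V s'| ≤ ν) (hν₀ : 0 ≤ ν)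
    (hs : c + ν ≤ V s) : generator r (fun x ↦ max (V x) c) s = generator r V s := by
  refine generator_congr (max_eq_left (by linarith)) fun s' hr ↦ max_eq_left ?_
  linarith [le_of_abs_le (hν s' hr)]

theorem generator_max_le_upwardDrift (hr : ∀ s', 0 ≤ r s s') (V : S → R) (c : R) :
    generator r (fun x ↦ max (V x) c) s ≤ upwardDrift r V s := by
  rw [generator, upwardDrift, Finset.sum_filter]
  refine Finset.sum_le_sum fun s' _ ↦ ?_
  have increment_le : max (V s') c - max (V s) c ≤ max (V s' - V s) 0 := by
    simpa only [sub_self] using max_sub_max_le_max (V s') c (V s) c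
  refine (mul_le_mul_of_nonneg_left increment_le (hr s')).trans_eq ?_
  split_ifs with hup
  · rw [max_eq_left (sub_pos.2 hup).le]
  · rw [max_eq_right (sub_nonpos.2 (not_lt.1 hup)), mul_zero]

theorem generator_max_le (hr : ∀ s', 0 ≤ r s s') (hν₀ : 0 ≤ ν)
    (hν : ∀ s', r s s' ≠ 0 → |V s - V s'| ≤ ν) (hf : upwardDrift r V s ≤ f)
    (hdrift : c + ν ≤ V s → generator r V s ≤ -γ) :
    generator r (fun x ↦ max (V x) c) s
      ≤ f * (if c - ν ≤ V s then 1 else 0) - (f + γ) * (if c + ν ≤ V s then 1 else 0) := by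
  by_cases hlow : c - ν ≤ V s
  · by_cases hhigh : c + ν ≤ V s
    · rw [if_pos hlow, if_pos hhigh, generator_max_eq_generator hν hν₀ hhigh]
      linarith [hdrift hhigh]
    · rw [if_pos hlow, if_neg hhigh]
      linarith [generator_max_le_upwardDrift hr V c]
  · have hhigh : ¬ c + ν ≤ V s := by linarith
    rw [if_neg hlow, if_neg hhigh, generator_max_eq_zero hν hν₀ (not_le.1 hlow).le]
    simp

theorem tailMass_le_sum (hπ₀ : ∀ s, 0 ≤ π s) (V : S → R) (b : R) :
    tailMass π V b ≤ ∑ s, π s :=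
  Finset.sum_le_sum_of_subset_of_nonneg (Finset.filter_subset _ _) fun s _ _ ↦ hπ₀ s

theorem IsStationary.add_mul_tailMass_le (hπ : IsStationary r π) (hπ₀ : ∀ s, 0 ≤ π s)
    (hr : ∀ s s', 0 ≤ r s s') (hν₀ : 0 ≤ ν) (hν : ∀ s s', r s s' ≠ 0 → |V s - V s'| ≤ ν)
    (hf : ∀ s, upwardDrift r V s ≤ f) (hdrift : ∀ s, c + ν ≤ V s → generator r V s ≤ -γ) :
    (f + γ) * tailMass π V (c + ν) ≤ f * tailMass π V (c - ν) := by
  rw [← sub_nonneg]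
  calc 0 = ∑ s, π s * generator r (fun x ↦ max (V x) c) s :=
        (hπ.sum_mul_generator_eq_zero _).symm
    _ ≤ ∑ s, π s * (f * (if c - ν ≤ V s then 1 else 0)
          - (f + γ) * (if c + ν ≤ V s then 1 else 0)) :=
        Finset.sum_le_sum fun s _ ↦ mul_le_mul_of_nonneg_left
          (generator_max_le (hr s) hν₀ (hν s) (hf s) (hdrift s)) (hπ₀ s)
    _ = f * tailMass π V (c - ν) - (f + γ) * tailMass π V (c + ν) := by
        simp only [tailMass_eq_sum_mul_ite, mul_sub, Finset.sum_sub_distrib, Finset.mul_sum,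
          mul_left_comm]

end Drift

theorem IsStationary.tailMass_le_geometric [Field R] [LinearOrder R] [IsStrictOrderedRing R]
    {r : S → S → R} {π V : S → R} {ν f B γ : R} (hπ : IsStationary r π) (hπ₀ : ∀ s, 0 ≤ π s)
    (hr : ∀ s s', 0 ≤ r s s') (hν₀ : 0 ≤ ν) (hν : ∀ s s', r s s' ≠ 0 → |V s - V s'| ≤ ν)
    (hf₀ : 0 ≤ f) (hf : ∀ s, upwardDrift r V s ≤ f) (hγ : 0 < γ)
    (hdrift : ∀ s, B ≤ V s → generator r V s ≤ -γ) (j : ℕ) :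
    tailMass π V (B + 2 * ν * j) ≤ (f / (f + γ)) ^ j * ∑ s, π s := by
  induction j with
  | zero => simpa only [pow_zero, one_mul] using tailMass_le_sum hπ₀ V _
  | succ j ih =>
    have hfγ : 0 < f + γ := by positivity
    have level_nonneg : 0 ≤ 2 * ν * j := by positivity
    have step : (f + γ) * tailMass π V (B + 2 * ν * (j + 1 : ℕ))
        ≤ f * tailMass π V (B + 2 * ν * j) := by
      convert hπ.add_mul_tailMass_le (c := B + 2 * ν * j + ν) hπ₀ hr hν₀ hν hf
        (fun s hs ↦ hdrift s (by linarith)) using 3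
      · push_cast; ring
      · ring
    calc tailMass π V (B + 2 * ν * (j + 1 : ℕ))
        ≤ f / (f + γ) * tailMass π V (B + 2 * ν * j) := by
          rwa [div_mul_eq_mul_div, le_div_iff₀' hfγ]
      _ ≤ f / (f + γ) * ((f / (f + γ)) ^ j * ∑ s, π s) := by gcongr
      _ = (f / (f + γ)) ^ (j + 1) * ∑ s, π s := by rw [pow_succ', mul_assoc]

theorem div_add_le_exp {f γ : ℝ} (hf : 0 < f) (hγ : 0 ≤ γ) (hγf : γ ≤ 2 * f) :
    f / (f + γ) ≤ Real.exp (-γ / (2 * f)) := by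
  have hx : |γ / (2 * f)| ≤ 1 := by
    rwa [abs_of_nonneg (by positivity), div_le_one (by positivity)]
  have exp_le : Real.exp (γ / (2 * f)) ≤ (f + γ) / f := by
    have h := le_of_abs_le (Real.abs_exp_sub_one_le hx)
    rw [abs_of_nonneg (by positivity)] at h
    calc Real.exp (γ / (2 * f)) ≤ 1 + 2 * (γ / (2 * f)) := by linarith
      _ = (f + γ) / f := by field_simp
  rw [neg_div, Real.exp_neg, ← inv_div (f + γ) f]
  gcongr

theorem IsStationary.tailMass_le_exp {r : S → S → ℝ} {π V : S → ℝ} {ν f B γ : ℝ}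
    (hπ : IsStationary r π) (hπ₀ : ∀ s, 0 ≤ π s) (hr : ∀ s s', 0 ≤ r s s') (hν₀ : 0 ≤ ν)
    (hν : ∀ s s', r s s' ≠ 0 → |V s - V s'| ≤ ν) (hf : ∀ s, upwardDrift r V s ≤ f)
    (hγ : 0 < γ) (hγf : γ ≤ 2 * f) (hdrift : ∀ s, B ≤ V s → generator r V s ≤ -γ) (j : ℕ) :
    tailMass π V (B + 2 * ν * j) ≤ Real.exp (-(j * γ) / (2 * f)) * ∑ s, π s := by
  have hf₀ : 0 < f := by linarith
  have total_nonneg : 0 ≤ ∑ s, π s := Finset.sum_nonneg fun s _ ↦ hπ₀ s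
  calc tailMass π V (B + 2 * ν * j)
      ≤ (f / (f + γ)) ^ j * ∑ s, π s :=
        hπ.tailMass_le_geometric hπ₀ hr hν₀ hν hf₀.le hf hγ hdrift j
    _ ≤ Real.exp (-γ / (2 * f)) ^ j * ∑ s, π s := by
        gcongr
        exact div_add_le_exp hf₀ hγ.le hγf
    _ = Real.exp (-(j * γ) / (2 * f)) * ∑ s, π s := by
        rw [← Real.exp_nat_mul, ← mul_div_assoc, mul_neg]

end CTMC

/-- The exponential-form tail bound (used in the proof of Lemma 5.5): if the Lyapunov
function `V` has drift at most `-γ` whenever `V ≥ B`, with `0 < γ ≤ fmax`, then the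
stationary probability that `V ≥ B + 2 νmax j` is at most `exp(-jγ/(2 fmax))`. -/
theorem stmt_4 {S : Type*} [Fintype S] (r : S → S → ℝ)
    (hr : ∀ s s', s ≠ s' → 0 ≤ r s s') (hdiag : ∀ s, r s s = 0)
    (pr : S → ℝ) (hpr0 : ∀ s, 0 ≤ pr s) (hpr1 : ∑ s, pr s = 1)
    (hbal : ∀ s, pr s * ∑ s', r s s' = ∑ s', pr s' * r s' s)
    (V : S → ℝ) (hV : ∀ s, 0 ≤ V s)
    (νmax fmax : ℝ)
    (hν : νmax = sSup ((fun p : S × S => |V p.1 - V p.2|) '' {p | 0 < r p.1 p.2}))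
    (hf : fmax = max 0 (⨆ s : S, ∑ s' ∈ Finset.univ.filter (fun s' => V s < V s'),
        r s s' * (V s' - V s)))
    (B γ : ℝ) (hB : 0 < B) (hγ : 0 < γ) (hγf : γ ≤ fmax)
    (hdrift : ∀ s, B ≤ V s → ∑ s', r s s' * (V s' - V s) ≤ -γ)
    (j : ℕ) (hj : 1 ≤ j) :
    ∑ s ∈ Finset.univ.filter (fun s => B + 2 * νmax * j ≤ V s), pr s
      ≤ Real.exp (-(j * γ) / (2 * fmax)) := by
  have hr₀ (s s' : S) : 0 ≤ r s s' := by
    obtain rfl | hne := eq_or_ne s s'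
    · exact (hdiag s).ge
    · exact hr s s' hne
  have hν₀ : 0 ≤ νmax := by
    rw [hν]
    exact Real.sSup_nonneg (Set.forall_mem_image.2 fun p _ ↦ abs_nonneg _)
  have jump_le (s s' : S) (h : r s s' ≠ 0) : |V s - V s'| ≤ νmax := by
    rw [hν]
    exact le_csSup (Set.toFinite _).bddAbove ⟨(s, s'), (hr₀ s s').lt_of_ne' h, rfl⟩
  have upward_le (s : S) : CTMC.upwardDrift r V s ≤ fmax := by
    rw [hf]
    exact (le_ciSup (Set.finite_range (CTMC.upwardDrift r V)).bddAbove s).trans (le_max_right _ _)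
  have tail_le := CTMC.IsStationary.tailMass_le_exp hbal hpr0 hr₀ hν₀ jump_le upward_le hγ
    (by linarith) hdrift j
  rwa [hpr1, mul_one] at tail_le
end

section
/- Let K and I be finite sets, let N > 0, H > 0, d̃ > 0, p > 0 be real numbers, let λ : K → [0,∞), and let z : K × I → [0,1]. Suppose that z(ℓ,r) ≥ min(1, λ(ℓ)·H/(N·d̃)) for every ℓ ∈ K and r ∈ I, that ∑_{ℓ∈K} λ(ℓ) ≥ N·d̃, and that |I| ≥ N·p. Then ∏_{ℓ∈K} ∏_{r∈I} (1 − z(ℓ,r)) ≤ exp(−H·N·p). -/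
/-!
Since `0 < exp (-t)` and `1 - t ≤ exp (-t)`, a truncated bound `min 1 t ≤ x` already gives
`1 - x ≤ exp (-t)`: the truncation costs nothing. Multiplied over all port-server pairs, these
bounds give the exponent `-(|I| * H * (∑ λ) / (N * d))`, where `(∑ λ) / (N * d)` is at least `1`.
-/

open Finset Real

lemma one_sub_le_exp_neg_of_min_one_le {t x : ℝ} (h : min 1 t ≤ x) : 1 - x ≤ exp (-t) := by
  rcases min_le_iff.mp h with one_le | t_le
  · exact (sub_nonpos.mpr one_le).trans (exp_pos _).le
  · exact (sub_le_sub_left t_le 1).trans (one_sub_le_exp_neg t)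

lemma prod_one_sub_le_exp_neg_sum {ι : Type*} {s : Finset ι} {t x : ι → ℝ}
    (hx : ∀ i ∈ s, x i ≤ 1) (ht : ∀ i ∈ s, min 1 (t i) ≤ x i) :
    ∏ i ∈ s, (1 - x i) ≤ exp (-∑ i ∈ s, t i) :=
  calc ∏ i ∈ s, (1 - x i)
      ≤ ∏ i ∈ s, exp (-t i) :=
        prod_le_prod (fun i hi => sub_nonneg.mpr (hx i hi))
          fun i hi => one_sub_le_exp_neg_of_min_one_le (ht i hi)
    _ = exp (-∑ i ∈ s, t i) := by rw [← exp_sum, sum_neg_distrib]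

lemma le_sum_mul_div_of_le_sum {ι 𝕜 : Type*} [Field 𝕜] [LinearOrder 𝕜] [IsStrictOrderedRing 𝕜]
    {s : Finset ι} {w : ι → 𝕜} {a c : 𝕜} (ha : 0 ≤ a) (hc : 0 < c) (hw : c ≤ ∑ i ∈ s, w i) :
    a ≤ ∑ i ∈ s, w i * a / c := by
  rw [← sum_div, ← sum_mul, le_div_iff₀ hc, mul_comm a c]
  exact mul_le_mul_of_nonneg_right hw ha

theorem stmt_7_general {A B : Type*} {K : Finset A} {I : Finset B} {c H m : ℝ}
    (hc : 0 < c) (hH : 0 ≤ H) {lam : A → ℝ} {z : A → B → ℝ}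
    (hz : ∀ ℓ ∈ K, ∀ r ∈ I, z ℓ r ≤ 1)
    (hzlow : ∀ ℓ ∈ K, ∀ r ∈ I, min 1 (lam ℓ * H / c) ≤ z ℓ r)
    (hK : c ≤ ∑ ℓ ∈ K, lam ℓ) (hI : m ≤ (#I : ℝ)) :
    ∏ ℓ ∈ K, ∏ r ∈ I, (1 - z ℓ r) ≤ exp (-(H * m)) := by
  have exponent_le : H * m ≤ ∑ e ∈ K ×ˢ I, lam e.1 * H / c :=
    calc H * m
        ≤ H * #I := mul_le_mul_of_nonneg_left hI hH
      _ ≤ (∑ ℓ ∈ K, lam ℓ * H / c) * #I :=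
          mul_le_mul_of_nonneg_right (le_sum_mul_div_of_le_sum hH hc hK) (Nat.cast_nonneg _)
      _ = ∑ e ∈ K ×ˢ I, lam e.1 * H / c := by
          simp only [sum_product, sum_const, nsmul_eq_mul, sum_mul, mul_comm (#I : ℝ)]
  calc ∏ ℓ ∈ K, ∏ r ∈ I, (1 - z ℓ r)
      = ∏ e ∈ K ×ˢ I, (1 - z e.1 e.2) := (prod_product' K I fun ℓ r => 1 - z ℓ r).symm
    _ ≤ exp (-∑ e ∈ K ×ˢ I, lam e.1 * H / c) :=
        prod_one_sub_le_exp_neg_sum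
          (fun e he => hz e.1 (mem_product.mp he).1 e.2 (mem_product.mp he).2)
          fun e he => hzlow e.1 (mem_product.mp he).1 e.2 (mem_product.mp he).2
    _ ≤ exp (-(H * m)) := exp_le_exp.mpr (neg_le_neg exponent_le)

/-- The disconnection estimate at the core of Theorems 3.5 and 3.6: if each edge
probability `z ℓ r` is at least `min(1, λ(ℓ)·H/(N·d̃))`, the total arrival rate of the
port set `K` is at least `N·d̃`, and the server set `I` has size at least `N·p`, then
the probability `∏∏(1 − z)` that `K` and `I` are disconnected is at most
`exp(−H·N·p)`. -/
theorem stmt_7 {A B : Type*} (K : Finset A) (I : Finset B)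
    (N H d p : ℝ) (hN : 0 < N) (hH : 0 < H) (hd : 0 < d) (hp : 0 < p)
    (lam : A → ℝ) (hlam : ∀ ℓ ∈ K, 0 ≤ lam ℓ)
    (z : A → B → ℝ)
    (hz01 : ∀ ℓ ∈ K, ∀ r ∈ I, z ℓ r ∈ Set.Icc (0 : ℝ) 1)
    (hzlow : ∀ ℓ ∈ K, ∀ r ∈ I, min 1 (lam ℓ * H / (N * d)) ≤ z ℓ r)
    (hKsum : N * d ≤ ∑ ℓ ∈ K, lam ℓ)
    (hI : N * p ≤ (I.card : ℝ)) :
    ∏ ℓ ∈ K, ∏ r ∈ I, (1 - z ℓ r) ≤ Real.exp (-(H * N * p)) := by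
  rw [mul_assoc]
  exact stmt_7_general (mul_pos hN hd) hH.le (fun ℓ hℓ r hr => (hz01 ℓ hℓ r hr).2) hzlow hKsum hI
end

section
/- Let 𝓛 be a finite set of ports with |𝓛| = L and 𝓡 a finite set of servers with |𝓡| = N, with nested subsets 𝓡¹ ⊆ 𝓡² ⊆ 𝓡, and suppose every port has the same arrival rate λ̄ > 0. Let μ₁ > 0 with L·λ̄ ≤ N·μ₁ and λ̄ ≤ N·μ₁. Let 0 < p₁ ≤ p₂ < 1/2 and 0 < d̃₁ ≤ d̃₂ be such that N·p₁, N·p₂ are positive integers and, for j ∈ {1,2}, k_j := N·d̃_j/λ̄ is a positive integer with k_j ≤ ⌈N·μ₁/λ̄⌉/2. Set H_j = 6·(−ln p_j + (d̃_j/(p_j·λ̄))·ln(2μ₁/d̃_j)) for j ∈ {1,2}. Form a random bipartite graph G between 𝓛 and 𝓡 in which, independently over all pairs, port ℓ is joined to server r ∈ 𝓡¹ with probability min(1, λ̄·H₁/(N·d̃₁)), and to server r ∈ 𝓡² ∖ 𝓡¹ with probability min(1, λ̄·H₂/(N·d̃₂)). For a subset 𝓘 ⊆ 𝓡, let D_𝓘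 = λ̄ times the number of ports with no edge to any server in 𝓘. Then with probability at least 1 − 2·C(N, N·p₁)^{−1}, the graph G satisfies simultaneously: D_𝓘 ≤ N·d̃₁ for every 𝓘 ⊆ 𝓡¹ with |𝓘| ≥ N·p₁, and D_𝓘 ≤ N·d̃₂ for every 𝓘 ⊆ 𝓡² with |𝓘| ≥ N·p₂. -/
open scoped Classical

/-!
A bad graph contains an empty rectangle: `k = ⌈N p⌉` servers and `m = ⌈N d / λ⌉` ports with no edge
between them. A fixed rectangle is empty with probability at most `exp (-k m h)`, where `min 1 h` is
the edge probability, and there are at most `C(N, k) C(L, m)` rectangles to choose from. From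
`C(n, k) ≤ (e n / k) ^ k`, the value of `h` makes `C(N, k) ^ 2 C(L, m) ≤ exp (k m h)`, so
the union bound gives failure probability at most `1 / C(N, k)` for each of the two families. The
edge probabilities decrease in `p` and `d`, so the edges at servers of the first family are also
likely enough for the second.
-/

open Finset Real

section BernoulliSubset

variable {E : Type*} [Fintype E] {z : E → ℝ} {P Q : Finset E → Prop}

/-- The probability that the random subset of `E` containing each `e` independently with
probability `z e` equals `G`. -/
noncomputable def bernoulliWeight (z : E → ℝ) (G : Finset E) : ℝ :=
  ∏ e, if e ∈ G then z e else 1 - z e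

/-- The probability that the random subset of `E` containing each `e` independently with
probability `z e` satisfies `P`, as a finite sum; it is defined for all real `z`. -/
noncomputable def bernoulliProb (z : E → ℝ) (P : Finset E → Prop) : ℝ :=
  ∑ G with P G, bernoulliWeight z G

theorem bernoulliWeight_nonneg (hz : ∀ e, z e ∈ Set.Icc 0 1) (G : Finset E) :
    0 ≤ bernoulliWeight z G := by
  refine prod_nonneg fun e _ => ?_
  split_ifs
  · exact (hz e).1
  · exact sub_nonneg.2 (hz e).2

theorem bernoulliWeight_eq_mul_compl (z : E → ℝ) (G : Finset E) :
    bernoulliWeight z G = (∏ e ∈ G, z e) * ∏ e ∈ Gᶜ, (1 - z e) := by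
  rw [bernoulliWeight, prod_ite, filter_univ_mem, filter_notMem_eq_sdiff, compl_eq_univ_sdiff]

theorem sum_bernoulliWeight (z : E → ℝ) : ∑ G, bernoulliWeight z G = 1 := by
  simp only [bernoulliWeight_eq_mul_compl, ← Fintype.prod_add, add_sub_cancel, prod_const_one]

theorem bernoulliProb_forall_notMem (z : E → ℝ) (S : Finset E) :
    bernoulliProb z (fun G => ∀ e ∈ S, e ∉ G) = ∏ e ∈ S, (1 - z e) := by
  calc
    _ = ∑ G, (∏ e ∈ G, if e ∈ S then 0 else z e) * ∏ e ∈ Gᶜ, (1 - z e) := by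
        rw [bernoulliProb, sum_filter]
        refine sum_congr rfl fun G _ => ?_
        split_ifs with hG
        · rw [bernoulliWeight_eq_mul_compl]
          congr 1
          exact prod_congr rfl fun e he => (if_neg fun heS => hG e heS he).symm
        · push Not at hG
          obtain ⟨e, heS, heG⟩ := hG
          have : (∏ e ∈ G, if e ∈ S then 0 else z e) = 0 := prod_eq_zero heG (if_pos heS)
          rw [this, zero_mul]
    _ = ∏ e, ((if e ∈ S then 0 else z e) + (1 - z e)) := (Fintype.prod_add _ _).symm
    _ = ∏ e ∈ S, ((if e ∈ S then 0 else z e) + (1 - z e)) := by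
        refine (prod_subset (subset_univ S) fun e _ he => ?_).symm
        rw [if_neg he, add_sub_cancel]
    _ = ∏ e ∈ S, (1 - z e) := prod_congr rfl fun e he => by rw [if_pos he, zero_add]

theorem bernoulliProb_mono (hz : ∀ e, z e ∈ Set.Icc 0 1) (hPQ : ∀ G, P G → Q G) :
    bernoulliProb z P ≤ bernoulliProb z Q :=
  sum_le_sum_of_subset_of_nonneg (monotone_filter_right _ fun G _ => hPQ G)
    fun G _ _ => bernoulliWeight_nonneg hz G

theorem bernoulliProb_exists_mem_le_sum {ι : Type*} (hz : ∀ e, z e ∈ Set.Icc 0 1) (s : Finset ι)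
    (P : ι → Finset E → Prop) :
    bernoulliProb z (fun G => ∃ i ∈ s, P i G) ≤ ∑ i ∈ s, bernoulliProb z (P i) := by
  simp only [bernoulliProb, sum_filter]
  rw [sum_comm]
  refine sum_le_sum fun G _ => ?_
  have weight_nonneg (i : ι) : 0 ≤ if P i G then bernoulliWeight z G else 0 :=
    ite_nonneg (bernoulliWeight_nonneg hz G) le_rfl
  split_ifs with hG
  · obtain ⟨i, hi, hiG⟩ := hG
    exact (if_pos hiG).ge.trans (single_le_sum (fun j _ => weight_nonneg j) hi)
  · exact sum_nonneg fun i _ => weight_nonneg i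

theorem one_sub_le_bernoulliProb_and (hz : ∀ e, z e ∈ Set.Icc 0 1) (P Q : Finset E → Prop) :
    1 - (bernoulliProb z (fun G => ¬ P G) + bernoulliProb z fun G => ¬ Q G) ≤
      bernoulliProb z fun G => P G ∧ Q G := by
  rw [sub_le_iff_le_add, ← sum_bernoulliWeight z]
  simp only [bernoulliProb, sum_filter, ← sum_add_distrib]
  refine sum_le_sum fun G _ => ?_
  have := bernoulliWeight_nonneg hz G
  by_cases hP : P G <;> by_cases hQ : Q G <;> simp [hP, hQ, this]

end BernoulliSubset

section BipartiteGraph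

variable {α β : Type*} [Fintype α]

/-- The left vertices of the bipartite graph with edge set `G` that have no edge into `I`. -/
noncomputable def unlinked (G : Finset (α × β)) (I : Finset β) : Finset α :=
  {l | ∀ r ∈ I, (l, r) ∉ G}

/-- The well-connectedness condition (Assumption 3.2) for one family `R` of right vertices: the
total arrival rate at the left vertices with no edge into `I`, each contributing `lam`, is at most
`b` for every `I ⊆ R` with at least `a` elements. -/
def WellConnected (lam : ℝ) (R : Finset β) (a b : ℝ) (G : Finset (α × β)) : Prop :=
  ∀ I ⊆ R, a ≤ #I → lam * #(unlinked G I) ≤ b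

theorem exists_empty_rectangle {G : Finset (α × β)} {R I : Finset β} {k m : ℕ} (hIR : I ⊆ R)
    (hk : k ≤ #I) (hm : m ≤ #(unlinked G I)) :
    ∃ T ∈ powersetCard m univ ×ˢ powersetCard k R, ∀ e ∈ T.1 ×ˢ T.2, e ∉ G := by
  obtain ⟨J, hJI, hJ⟩ := exists_subset_card_eq hk
  obtain ⟨A, hA, hAm⟩ := exists_subset_card_eq hm
  refine ⟨(A, J), ?_, fun ⟨l, r⟩ he => ?_⟩
  · exact mem_product.2 ⟨mem_powersetCard.2 ⟨subset_univ A, hAm⟩,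
      mem_powersetCard.2 ⟨hJI.trans hIR, hJ⟩⟩
  · obtain ⟨hl, hr⟩ := mem_product.1 he
    exact (mem_filter.1 (hA hl)).2 r (hJI hr)

theorem bernoulliProb_exists_le_card_unlinked_le [Fintype β] {z : α × β → ℝ}
    (hz : ∀ e, z e ∈ Set.Icc 0 1) {R : Finset β} {q : ℝ} (hq : ∀ e, e.2 ∈ R → q ≤ z e) (k m : ℕ) :
    bernoulliProb z (fun G => ∃ I ⊆ R, k ≤ #I ∧ m ≤ #(unlinked G I)) ≤
      (#R).choose k * (Fintype.card α).choose m * (1 - q) ^ (k * m) := by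
  set rectangles := powersetCard m (univ : Finset α) ×ˢ powersetCard k R
  calc
    _ ≤ bernoulliProb z fun G => ∃ T ∈ rectangles, ∀ e ∈ T.1 ×ˢ T.2, e ∉ G :=
        bernoulliProb_mono hz fun _ ⟨_, hIR, hk, hm⟩ => exists_empty_rectangle hIR hk hm
    _ ≤ ∑ T ∈ rectangles, bernoulliProb z fun G => ∀ e ∈ T.1 ×ˢ T.2, e ∉ G :=
        bernoulliProb_exists_mem_le_sum hz _ _
    _ ≤ #rectangles • (1 - q) ^ (k * m) := by
        refine sum_le_card_nsmul _ _ _ fun T hT => ?_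
        obtain ⟨hA, hJ⟩ := mem_product.1 hT
        obtain ⟨-, hA⟩ := mem_powersetCard.1 hA
        obtain ⟨hJR, hJ⟩ := mem_powersetCard.1 hJ
        rw [bernoulliProb_forall_notMem, mul_comm k, ← hA, ← hJ, ← card_product,
          ← prod_const]
        refine prod_le_prod (fun e _ => sub_nonneg.2 (hz e).2) fun e he => ?_
        exact sub_le_sub_left (hq e (hJR (mem_product.1 he).2)) 1
    _ = _ := by
        rw [nsmul_eq_mul, card_product, card_powersetCard, card_powersetCard, card_univ,
          Nat.cast_mul, mul_comm (((Fintype.card α).choose m : ℕ) : ℝ)]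

end BipartiteGraph

section Binomial

theorem choose_le_choose_of_two_mul_le_succ {n a b : ℕ} (hab : a ≤ b) (hb : 2 * b ≤ n + 1) :
    n.choose a ≤ n.choose b := by
  induction b, hab using Nat.le_induction with
  | base => exact le_rfl
  | succ b _ ih =>
    refine (ih (by lia)).trans (Nat.le_of_mul_le_mul_right ?_ b.succ_pos)
    rw [Nat.choose_succ_right_eq]
    exact Nat.mul_le_mul_left _ (by lia)

theorem choose_ceil_mul_le_choose_ceil_mul (n : ℕ) {p p' : ℝ} (hpp' : p ≤ p') (hp' : p' ≤ 1 / 2) :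
    n.choose ⌈n * p⌉₊ ≤ n.choose ⌈n * p'⌉₊ := by
  refine choose_le_choose_of_two_mul_le_succ (Nat.ceil_mono (by gcongr)) ?_
  have ceil_le : ⌈n * p'⌉₊ ≤ ⌈(n : ℝ) / 2⌉₊ := Nat.ceil_mono (by nlinarith [n.cast_nonneg (α := ℝ)])
  have ceil_half_lt := Nat.ceil_lt_add_one (a := (n : ℝ) / 2) (by positivity)
  have : 2 * ⌈(n : ℝ) / 2⌉₊ < n + 2 := by
    have : 2 * (⌈(n : ℝ) / 2⌉₊ : ℝ) < n + 2 := by linarith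
    exact_mod_cast this
  lia

theorem choose_le_exp_mul_one_sub_log {n k : ℕ} {t : ℝ} (ht : 0 < t) (htk : t * n ≤ k) :
    (n.choose k : ℝ) ≤ exp (k * (1 - log t)) := by
  have pow_le : (n : ℝ) ^ k ≤ (k / t) ^ k :=
    pow_le_pow_left₀ n.cast_nonneg ((le_div_iff₀' ht).2 htk) k
  calc
    (n.choose k : ℝ) ≤ n ^ k / k.factorial := Nat.choose_le_pow_div k n
    _ ≤ (k / t) ^ k / k.factorial := by gcongr
    _ = k ^ k / k.factorial / t ^ k := by rw [div_pow, div_right_comm]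
    _ ≤ exp k / t ^ k := by
        gcongr
        exact pow_div_factorial_le_exp k k.cast_nonneg k
    _ = exp (k * (1 - log t)) := by rw [mul_one_sub, exp_sub, exp_nat_mul, exp_log ht]

theorem choose_le_exp_mul_log_two_div {n k : ℕ} {t : ℝ} (ht : 0 < t) (htk : t * n ≤ k) :
    (n.choose k : ℝ) ≤ exp (k * (2 * log (2 / t))) := by
  rcases lt_or_ge n k with hnk | hkn
  · rw [Nat.choose_eq_zero_of_lt hnk, Nat.cast_zero]
    exact (exp_pos _).le
  obtain rfl | hn := n.eq_zero_or_pos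
  · rw [Nat.le_zero.1 hkn]
    simp
  have ht1 : t ≤ 1 := by
    refine le_of_mul_le_mul_right (a := (n : ℝ)) ?_ (mod_cast hn)
    rw [one_mul]
    exact htk.trans (mod_cast hkn)
  refine (choose_le_exp_mul_one_sub_log ht htk).trans (exp_le_exp.2 ?_)
  gcongr
  rw [log_div two_ne_zero ht.ne']
  linarith [log_two_gt_d9, log_nonpos ht.le ht1]

theorem choose_sq_le_exp {n k : ℕ} {p : ℝ} (hp : 0 < p) (hp2 : p ≤ 1 / 2) (hpk : p * n ≤ k) :
    (n.choose k : ℝ) ^ 2 ≤ exp (6 * (k * -log p)) := by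
  have one_le : 1 ≤ 2 * -log p := by
    have := log_le_log hp hp2
    rw [one_div, log_inv] at this
    linarith [log_two_gt_d9]
  calc
    (n.choose k : ℝ) ^ 2 ≤ exp (k * (1 - log p)) ^ 2 := by
        gcongr
        exact choose_le_exp_mul_one_sub_log hp hpk
    _ = exp (2 * (k * (1 - log p))) := by rw [← exp_nat_mul, Nat.cast_ofNat]
    _ ≤ exp (6 * (k * -log p)) := by
        refine exp_le_exp.2 ?_
        nlinarith [(k.cast_nonneg : (0 : ℝ) ≤ k)]

theorem choose_sq_mul_choose_le_exp {n k l m : ℕ} {p t x : ℝ} (hn : 0 < n) (hp : 0 < p)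
    (hp2 : p ≤ 1 / 2) (hpk : n * p ≤ k) (ht : 0 < t) (ht2 : t ≤ 2) (htx : t * l ≤ x)
    (hx : 0 < x) (hxm : x ≤ m) :
    (n.choose k : ℝ) ^ 2 * l.choose m ≤
      exp (6 * (-log p / x + log (2 / t) / (n * p)) * (k * m : ℕ)) := by
  have neg_log_p_nonneg : 0 ≤ -log p := neg_nonneg.2 (log_nonpos hp.le (by linarith))
  have log_t_nonneg : 0 ≤ log (2 / t) := log_nonneg ((one_le_div ht).2 ht2)
  have left_le : 6 * (k * -log p) ≤ 6 * (-log p / x) * (k * m) := by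
    have : 1 ≤ m / x := (one_le_div hx).2 hxm
    calc
      _ ≤ 6 * (k * -log p) * (m / x) := le_mul_of_one_le_right (by positivity) this
      _ = _ := by ring
  have right_le : m * (2 * log (2 / t)) ≤ 6 * (log (2 / t) / (n * p)) * (k * m) := by
    have : 1 ≤ k / (n * p) := (one_le_div (by positivity)).2 hpk
    calc
      _ ≤ m * (6 * log (2 / t)) := by gcongr; norm_num
      _ ≤ m * (6 * log (2 / t)) * (k / (n * p)) := le_mul_of_one_le_right (by positivity) this
      _ = _ := by ring
  calc
    _ ≤ exp (6 * (k * -log p)) * exp (m * (2 * log (2 / t))) := by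
        gcongr
        · exact choose_sq_le_exp hp hp2 (by rwa [mul_comm])
        · exact choose_le_exp_mul_log_two_div ht (htx.trans hxm)
    _ ≤ _ := by
        rw [← exp_add, mul_add, add_mul, Nat.cast_mul]
        exact exp_le_exp.2 (add_le_add left_le right_le)

theorem one_sub_min_one_le_exp_neg (h : ℝ) : 1 - min 1 h ≤ exp (-h) := by
  rcases le_total 1 h with h1 | h1
  · rw [min_eq_left h1, sub_self]
    exact (exp_pos _).le
  · rw [min_eq_right h1]
    exact one_sub_le_exp_neg h

end Binomial

section EdgeProbability

variable {N : ℕ} {lam μ p d : ℝ}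

theorem le_of_mul_div_le_half_ceil (hN : 0 < N) (hlam : 0 < lam) (hlamμ : lam ≤ N * μ)
    (hd : N * d / lam ≤ ⌈N * μ / lam⌉₊ / 2) : d ≤ μ := by
  have one_le : 1 ≤ N * μ / lam := (one_le_div hlam).2 hlamμ
  have ceil_le := Nat.ceil_le_two_mul (by linarith : 2⁻¹ ≤ N * μ / lam)
  have : N * d / lam ≤ N * μ / lam := by linarith
  exact le_of_mul_le_mul_left ((div_le_div_iff_of_pos_right hlam).1 this) (mod_cast hN)

/-- The ratio `λ̄ H / (N d̃)` with `H = 6 (-ln p + (d̃ / (p λ̄)) ln (2 μ₁ / d̃))`; truncated at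
`1`, it is the edge probability of the random graph. -/
noncomputable def edgeRate (N : ℕ) (lam μ p d : ℝ) : ℝ :=
  lam * (6 * (-log p + d / (p * lam) * log (2 * μ / d))) / (N * d)

theorem edgeRate_eq (hlam : 0 < lam) (hd : 0 < d) :
    edgeRate N lam μ p d =
      6 * (-log p / (N * d / lam) + log (2 / (d / μ)) / (N * p)) := by
  rw [edgeRate, div_div_eq_mul_div]
  field_simp

theorem edgeRate_nonneg (hlam : 0 < lam) (hp : 0 < p) (hp1 : p ≤ 1) (hd : 0 < d)
    (hdμ : d ≤ 2 * μ) : 0 ≤ edgeRate N lam μ p d := by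
  have neg_log_p_nonneg : 0 ≤ -log p := neg_nonneg.2 (log_nonpos hp.le hp1)
  have log_d_nonneg : 0 ≤ log (2 * μ / d) := log_nonneg ((one_le_div hd).2 hdμ)
  unfold edgeRate
  positivity

theorem edgeRate_anti {p' d' : ℝ} (hN : 0 < N) (hlam : 0 < lam) (hp : 0 < p) (hpp' : p ≤ p')
    (hp1 : p' ≤ 1) (hd : 0 < d) (hdd' : d ≤ d') (hdμ : d' ≤ 2 * μ) :
    edgeRate N lam μ p' d' ≤ edgeRate N lam μ p d := by
  have hd' : 0 < d' := hd.trans_le hdd'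
  have hμ : 0 < μ := by linarith
  have neg_log_p_nonneg : 0 ≤ -log p := neg_nonneg.2 (log_nonpos hp.le (hpp'.trans hp1))
  have log_d_nonneg : 0 ≤ log (2 / (d / μ)) := by
    rw [div_div_eq_mul_div]
    exact log_nonneg ((one_le_div hd).2 (hdd'.trans hdμ))
  rw [edgeRate_eq hlam hd, edgeRate_eq hlam hd']
  gcongr

end EdgeProbability

section WellConnected

variable {α β : Type*}

/-- The edge probabilities of the random graph: `min 1 h₁` at the servers in `R₁`, `min 1 h₂` at the
other servers in `R₂`, and `0` elsewhere. -/
noncomputable def edgeProb (R₁ R₂ : Finset β) (h₁ h₂ : ℝ) (e : α × β) : ℝ :=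
  if e.2 ∈ R₁ then min 1 h₁ else if e.2 ∈ R₂ then min 1 h₂ else 0

theorem edgeProb_mem_Icc (R₁ R₂ : Finset β) {h₁ h₂ : ℝ} (hh₁ : 0 ≤ h₁) (hh₂ : 0 ≤ h₂)
    (e : α × β) : edgeProb R₁ R₂ h₁ h₂ e ∈ Set.Icc 0 1 := by
  unfold edgeProb
  split_ifs <;> simp [hh₁, hh₂]

theorem min_one_le_edgeProb_left {R₁ : Finset β} (R₂ : Finset β) (h₁ h₂ : ℝ) {e : α × β}
    (he : e.2 ∈ R₁) : min 1 h₁ ≤ edgeProb R₁ R₂ h₁ h₂ e :=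
  (if_pos he).ge

theorem min_one_le_edgeProb_right (R₁ : Finset β) {R₂ : Finset β} {h₁ h₂ : ℝ} (hh : h₂ ≤ h₁)
    {e : α × β} (he : e.2 ∈ R₂) : min 1 h₂ ≤ edgeProb R₁ R₂ h₁ h₂ e := by
  unfold edgeProb
  split_ifs
  · exact min_le_min_left 1 hh
  · exact le_rfl

variable [Fintype α]

theorem exists_le_card_unlinked_of_not_wellConnected {lam a b : ℝ} {R : Finset β}
    {G : Finset (α × β)} (hlam : 0 < lam) (hG : ¬ WellConnected lam R a b G) :
    ∃ I ⊆ R, ⌈a⌉₊ ≤ #I ∧ ⌈b / lam⌉₊ ≤ #(unlinked G I) := by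
  unfold WellConnected at hG
  push Not at hG
  obtain ⟨I, hIR, haI, hbI⟩ := hG
  exact ⟨I, hIR, Nat.ceil_le.2 haI, Nat.ceil_le.2 ((div_le_iff₀' hlam).2 hbI.le)⟩

variable [Fintype β] {L N : ℕ} {lam μ : ℝ}

theorem bernoulliProb_not_wellConnected_le (hL : Fintype.card α = L) (hN : Fintype.card β = N)
    (hNpos : 0 < N) (hlam : 0 < lam) (hLlam : L * lam ≤ N * μ) {p d : ℝ} (hp : 0 < p)
    (hp2 : p ≤ 1 / 2) (hd : 0 < d) (hdμ : d ≤ 2 * μ) {z : α × β → ℝ}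
    (hz : ∀ e, z e ∈ Set.Icc 0 1) {R : Finset β}
    (hzR : ∀ e, e.2 ∈ R → min 1 (edgeRate N lam μ p d) ≤ z e) :
    bernoulliProb z (fun G => ¬ WellConnected lam R (N * p) (N * d) G) ≤
      1 / N.choose ⌈N * p⌉₊ := by
  have hμ : 0 < μ := by linarith
  have hx : 0 < N * d / lam := by positivity
  have hLx : d / μ * L ≤ N * d / lam := by
    rw [div_mul_eq_mul_div, div_le_div_iff₀ hμ hlam]
    nlinarith
  have hkN : ⌈N * p⌉₊ ≤ N := Nat.ceil_le.2 (mul_le_of_le_one_right N.cast_nonneg (by linarith))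
  set h := edgeRate N lam μ p d with h_def
  set k := ⌈N * p⌉₊
  set m := ⌈N * d / lam⌉₊
  have choose_mul_le : (N.choose k : ℝ) ^ 2 * L.choose m ≤ exp (h * (k * m : ℕ)) := by
    rw [h_def, edgeRate_eq hlam hd]
    exact choose_sq_mul_choose_le_exp hNpos hp hp2 (Nat.le_ceil _) (by positivity)
      ((div_le_iff₀ hμ).2 hdμ) hLx hx (Nat.le_ceil _)
  have choose_pos : (0 : ℝ) < N.choose k := mod_cast Nat.choose_pos hkN
  calc
    _ ≤ bernoulliProb z fun G => ∃ I ⊆ R, k ≤ #I ∧ m ≤ #(unlinked G I) :=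
        bernoulliProb_mono hz fun _ => exists_le_card_unlinked_of_not_wellConnected hlam
    _ ≤ (#R).choose k * (Fintype.card α).choose m * (1 - min 1 h) ^ (k * m) :=
        bernoulliProb_exists_le_card_unlinked_le hz hzR k m
    _ ≤ N.choose k * L.choose m * exp (-h) ^ (k * m) := by
        have : 0 ≤ 1 - min 1 h := sub_nonneg.2 (min_le_left 1 h)
        rw [hL, ← hN]
        gcongr
        · exact card_le_univ R
        · exact one_sub_min_one_le_exp_neg h
    _ = (N.choose k : ℝ) ^ 2 * L.choose m / exp (h * (k * m : ℕ)) / N.choose k := by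
        rw [← exp_nat_mul, mul_neg, exp_neg, mul_comm h]
        field_simp
    _ ≤ 1 / N.choose k := by
        gcongr
        exact (div_le_one (exp_pos _)).2 choose_mul_le

theorem stmt_9_general (hL : Fintype.card α = L) (hN : Fintype.card β = N) (hNpos : 0 < N)
    (R₁ R₂ : Finset β) (hlam : 0 < lam) (hLlam : L * lam ≤ N * μ) {p₁ p₂ d₁ d₂ : ℝ} (hp₁ : 0 < p₁)
    (hp : p₁ ≤ p₂) (hp₂ : p₂ ≤ 1 / 2) (hd₁ : 0 < d₁) (hd : d₁ ≤ d₂) (hd₂ : d₂ ≤ 2 * μ) :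
    1 - 2 / (N.choose ⌈N * p₁⌉₊ : ℝ) ≤
      bernoulliProb
        (edgeProb (α := α) R₁ R₂ (edgeRate N lam μ p₁ d₁) (edgeRate N lam μ p₂ d₂))
        fun G => WellConnected lam R₁ (N * p₁) (N * d₁) G ∧
          WellConnected lam R₂ (N * p₂) (N * d₂) G := by
  have rate_anti := edgeRate_anti hNpos hlam hp₁ hp (by linarith) hd₁ hd hd₂
  have rate_nonneg :=
    edgeRate_nonneg (N := N) hlam (hp₁.trans_le hp) (by linarith) (hd₁.trans_le hd) hd₂
  have prob_mem (e : α × β) := edgeProb_mem_Icc R₁ R₂ (rate_nonneg.trans rate_anti) rate_nonneg e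
  have first_bad := bernoulliProb_not_wellConnected_le hL hN hNpos hlam hLlam hp₁ (hp.trans hp₂)
    hd₁ (hd.trans hd₂) prob_mem fun _ => min_one_le_edgeProb_left R₂ _ _
  have second_bad := bernoulliProb_not_wellConnected_le hL hN hNpos hlam hLlam (hp₁.trans_le hp)
    hp₂ (hd₁.trans_le hd) hd₂ prob_mem fun _ => min_one_le_edgeProb_right R₁ rate_anti
  have second_le_first : 1 / (N.choose ⌈N * p₂⌉₊ : ℝ) ≤ 1 / N.choose ⌈N * p₁⌉₊ := by
    refine one_div_le_one_div_of_le (mod_cast Nat.choose_pos (Nat.ceil_le.2 ?_))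
      (mod_cast choose_ceil_mul_le_choose_ceil_mul N hp hp₂)
    exact mul_le_of_le_one_right N.cast_nonneg (by linarith)
  have both_good := one_sub_le_bernoulliProb_and prob_mem
    (WellConnected lam R₁ (N * p₁) (N * d₁)) (WellConnected lam R₂ (N * p₂) (N * d₂))
  rw [← one_add_one_eq_two, add_div]
  linarith

end WellConnected

/-- The random graph construction of Theorem 3.6 for homogeneous arrival rates: with
every port having the same arrival rate `λ̄`, the sparser random bipartite graph `G`
(`weight G` is the probability of a given edge set `G`) satisfies the
well-connectedness condition (Assumption 3.2) with probability at least
`1 − 2·C(N, N·p₁)⁻¹`. Here `D G I` is `λ̄` times the number of ports with no edge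
to the server subset `I`. -/
theorem stmt_9 {PortT ServT : Type*} [Fintype PortT] [Fintype ServT]
    (L N : ℕ) (hL : Fintype.card PortT = L) (hN : Fintype.card ServT = N)
    (hNpos : 0 < N)
    (R1 R2 : Finset ServT) (hR12 : R1 ⊆ R2)
    (lamb : ℝ) (hlamb : 0 < lamb)
    (μ₁ : ℝ) (hμ1 : 0 < μ₁)
    (hLlam : (L : ℝ) * lamb ≤ (N : ℝ) * μ₁) (hlam1 : lamb ≤ (N : ℝ) * μ₁)
    (p₁ p₂ d₁ d₂ : ℝ) (hp1 : 0 < p₁) (hp12 : p₁ ≤ p₂) (hp2 : p₂ < 1 / 2)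
    (hd1 : 0 < d₁) (hd12 : d₁ ≤ d₂)
    (k₁ k₂ : ℕ) (hk1pos : 0 < k₁) (hk1 : (k₁ : ℝ) = (N : ℝ) * p₁)
    (hk2pos : 0 < k₂) (hk2 : (k₂ : ℝ) = (N : ℝ) * p₂)
    (kd₁ kd₂ : ℕ) (hkd1pos : 0 < kd₁) (hkd1 : (kd₁ : ℝ) = (N : ℝ) * d₁ / lamb)
    (hkd2pos : 0 < kd₂) (hkd2 : (kd₂ : ℝ) = (N : ℝ) * d₂ / lamb)
    (hkd1half : (kd₁ : ℝ) ≤ (⌈(N : ℝ) * μ₁ / lamb⌉₊ : ℝ) / 2)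
    (hkd2half : (kd₂ : ℝ) ≤ (⌈(N : ℝ) * μ₁ / lamb⌉₊ : ℝ) / 2)
    (H₁ H₂ : ℝ)
    (hH1 : H₁ = 6 * (-Real.log p₁ + d₁ / (p₁ * lamb) * Real.log (2 * μ₁ / d₁)))
    (hH2 : H₂ = 6 * (-Real.log p₂ + d₂ / (p₂ * lamb) * Real.log (2 * μ₁ / d₂)))
    (z : PortT → ServT → ℝ)
    (hz : ∀ ℓ r, z ℓ r =
      if r ∈ R1 then min 1 (lamb * H₁ / ((N : ℝ) * d₁))
      else if r ∈ R2 then min 1 (lamb * H₂ / ((N : ℝ) * d₂))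
      else 0)
    (weight : Finset (PortT × ServT) → ℝ)
    (hweight : ∀ G, weight G = ∏ e : PortT × ServT,
      (if e ∈ G then z e.1 e.2 else 1 - z e.1 e.2))
    (D : Finset (PortT × ServT) → Finset ServT → ℝ)
    (hD : ∀ G I, D G I =
      lamb * ((Finset.univ.filter (fun ℓ : PortT => ∀ r ∈ I, (ℓ, r) ∉ G)).card : ℝ)) :
    1 - 2 / (N.choose k₁ : ℝ) ≤
      ∑ G ∈ Finset.univ.filter (fun G : Finset (PortT × ServT) =>
        (∀ I ⊆ R1, (N : ℝ) * p₁ ≤ (I.card : ℝ) → D G I ≤ (N : ℝ) * d₁) ∧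
        (∀ I ⊆ R2, (N : ℝ) * p₂ ≤ (I.card : ℝ) → D G I ≤ (N : ℝ) * d₂)),
        weight G := by
  have d₂_le : d₂ ≤ μ₁ := le_of_mul_div_le_half_ceil hNpos hlamb hlam1 (hkd2 ▸ hkd2half)
  rw [← Nat.ceil_natCast (R := ℝ) k₁, hk1]
  simp only [hweight, hD, hz, hH1, hH2]
  convert stmt_9_general hL hN hNpos R1 R2 hlamb hLlam hp1 hp12 hp2.le hd1 hd12 (by linarith)
    using 1
  unfold bernoulliProb bernoulliWeight WellConnected unlinked edgeProb edgeRate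
  congr!
end

section
/- Fix an integer K ≥ 1, real numbers μ₁ ≥ μ₂ ≥ ⋯ ≥ μ_K > 0 and α₁, …, α_{K−1} > 0, a real C*_K ≥ 0, and set λ = ∑_{m=1}^{K−1} μ_m α_m + μ_K·C*_K. Let ε > 0, b ≥ 1, and let N ≥ 1 satisfy ε²·N ≥ 1152·(μ₁/μ_K)·b⁵·ln N. Define τ = μ₁/μ_K, δ = μ_K·ε/(6·μ₁·b²), and χ = 96·τ·b³·ln N. Suppose s₁, …, s_K ≥ 0 satisfy s_m ≤ α_m for all m ≤ K−1, ∑_{m=1}^{K−1} s_m ≥ ∑_{m=1}^{K−1} α_m − (τ·δ + χ/(ε·N)), and s_K ≥ C*_K + 3·τ²·δ − χ/(ε·N). Then ∑_{m=1}^{K} μ_m s_m ≥ λ + μ₁·δ. -/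
/-!
Replacing the rate of every fast type by the upper bound `M` shows that a total shortfall of
`τ * δ + x` in their busy servers, with `x = χ / (ε * N)`, costs at most `M * (τ * δ + x)` in
departure rate. The slow type, of rate `r = M / τ`, has a surplus of at least
`3 * τ ^ 2 * δ - x`. As `τ * δ = ε / (6 * b ^ 2)`, the buffer-size condition says precisely that
`x ≤ τ * δ / 2`, and then, because `1 ≤ τ`, the rate gained from the surplus exceeds the rate lost
by at least `M * δ`.
-/

lemma antitoneOn_Icc_of_add_one_le {β : Type*} [Preorder β] {f : ℕ → β} {a b : ℕ}
    (hf : ∀ m, a ≤ m → m < b → f (m + 1) ≤ f m) : AntitoneOn f (Set.Icc a b) :=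
  antitoneOn_of_add_one_le Set.ordConnected_Icc fun m _ hm hm' ↦ hf m hm.1 hm'.2

lemma sum_Icc_sub_one_add_eq_sum_Icc {M : Type*} [AddCommMonoid M] (f : ℕ → M) {a b : ℕ}
    (hb : b ≠ 0) (hab : a ≤ b) :
    ∑ i ∈ Finset.Icc a (b - 1), f i + f b = ∑ i ∈ Finset.Icc a b, f i := by
  rw [Finset.Icc_sub_one_right_eq_Ico_of_not_isMin (not_isMin_iff_ne_bot.mpr hb),
    Finset.sum_Ico_add_eq_sum_Icc hab]

section OrderedRing

variable {ι R : Type*} [CommRing R] [PartialOrder R] [IsOrderedRing R]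

lemma sum_mul_sub_mul_le_sum_mul {t : Finset ι} {w f g : ι → R} {M d : R} (hM : 0 ≤ M)
    (hw : ∀ i ∈ t, w i ≤ M) (hgf : ∀ i ∈ t, g i ≤ f i)
    (hd : ∑ i ∈ t, f i - d ≤ ∑ i ∈ t, g i) :
    ∑ i ∈ t, w i * f i - M * d ≤ ∑ i ∈ t, w i * g i := by
  rw [sub_le_comm, ← Finset.sum_sub_distrib]
  calc ∑ i ∈ t, (w i * f i - w i * g i)
      = ∑ i ∈ t, w i * (f i - g i) := by simp only [mul_sub]
    _ ≤ ∑ i ∈ t, M * (f i - g i) := Finset.sum_le_sum fun i hi ↦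
        mul_le_mul_of_nonneg_right (hw i hi) (sub_nonneg.mpr (hgf i hi))
    _ = M * (∑ i ∈ t, f i - ∑ i ∈ t, g i) := by
        rw [← Finset.mul_sum, Finset.sum_sub_distrib]
    _ ≤ M * d := mul_le_mul_of_nonneg_left (sub_le_comm.mp hd) hM

end OrderedRing

section OrderedField

variable {ι 𝕜 : Type*} [Field 𝕜] [LinearOrder 𝕜] [IsStrictOrderedRing 𝕜]

lemma mul_le_surplus_sub_mul_shortfall {τ δ x : 𝕜} (hτ : 1 ≤ τ) (hδ : 0 ≤ δ)
    (hx : x ≤ τ * δ / 2) :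
    τ * δ ≤ (3 * τ ^ 2 * δ - x) - τ * (τ * δ + x) := by
  have hτδ : τ * δ ≤ τ * (τ * δ) := le_mul_of_one_le_left (by positivity) hτ
  have hτx : τ * x ≤ τ * (τ * δ / 2) := by gcongr
  linarith

lemma div_mul_le_div_of_mul_le_sq_mul {a c n x : 𝕜} (ha : 0 < a) (hc : 0 < c) (hn : 0 < n)
    (h : c * x ≤ a ^ 2 * n) :
    x / (a * n) ≤ a / c := by
  rw [div_le_div_iff₀ (by positivity) hc]
  linarith

theorem stmt_10_general {t : Finset ι} {μ α s : ι → 𝕜} {M r c y ε b N τ δ χ : 𝕜}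
    (hμ : ∀ m ∈ t, μ m ≤ M) (hr : 0 < r) (hrM : r ≤ M)
    (hε : 0 < ε) (hb : b ≠ 0) (hN : 0 < N) (hbuf : 12 * b ^ 2 * χ ≤ ε ^ 2 * N)
    (hτ : τ = M / r) (hδ : δ = r * ε / (6 * M * b ^ 2))
    (hsα : ∀ m ∈ t, s m ≤ α m)
    (hfast : ∑ m ∈ t, α m - (τ * δ + χ / (ε * N)) ≤ ∑ m ∈ t, s m)
    (hslow : c + 3 * τ ^ 2 * δ - χ / (ε * N) ≤ y) :
    ∑ m ∈ t, μ m * α m + r * c + M * δ ≤ ∑ m ∈ t, μ m * s m + r * y := by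
  have hM : 0 < M := hr.trans_le hrM
  have hM_eq : M = r * τ := by rw [hτ, mul_div_cancel₀ _ hr.ne']
  have hτ_one : 1 ≤ τ := by rwa [hτ, one_le_div hr]
  have hδ_nonneg : 0 ≤ δ := by rw [hδ]; positivity
  have hτδ : τ * δ / 2 = ε / (12 * b ^ 2) := by rw [hτ, hδ]; field_simp; norm_num
  set x := χ / (ε * N)
  have hx : x ≤ τ * δ / 2 := by
    rw [hτδ]
    exact div_mul_le_div_of_mul_le_sq_mul hε (by positivity) hN hbuf
  calc ∑ m ∈ t, μ m * α m + r * c + M * δ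
      = ∑ m ∈ t, μ m * α m + r * c + r * (τ * δ) := by rw [hM_eq, mul_assoc]
    _ ≤ ∑ m ∈ t, μ m * α m + r * c + r * ((3 * τ ^ 2 * δ - x) - τ * (τ * δ + x)) := by
        gcongr
        exact mul_le_surplus_sub_mul_shortfall hτ_one hδ_nonneg hx
    _ = (∑ m ∈ t, μ m * α m - M * (τ * δ + x)) + r * (c + 3 * τ ^ 2 * δ - x) := by
        rw [hM_eq]; ring
    _ ≤ ∑ m ∈ t, μ m * s m + r * y := by
        gcongr
        exact sum_mul_sub_mul_le_sum_mul hM.le hμ hsα hfast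

end OrderedField

/-- The arithmetic core of Lemma 5.6 (firstK-enoughWork): under the buffer-size
condition and the two state-space-collapse lower bounds on the busy-server fractions
`s m`, the total departure rate `∑ μ m * s m` exceeds `λ + μ₁ δ`. -/
theorem stmt_10 (K : ℕ) (hK : 1 ≤ K) (μ α s : ℕ → ℝ)
    (hμdec : ∀ m, 1 ≤ m → m < K → μ (m + 1) ≤ μ m) (hμK : 0 < μ K)
    (hα : ∀ m ∈ Finset.Icc 1 (K - 1), 0 < α m)
    (CK : ℝ) (hCK : 0 ≤ CK)
    (lam : ℝ) (hlam : lam = ∑ m ∈ Finset.Icc 1 (K - 1), μ m * α m + μ K * CK)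
    (ε b : ℝ) (hε : 0 < ε) (hb : 1 ≤ b)
    (N : ℕ) (hN : 1 ≤ N)
    (hbuf : 1152 * (μ 1 / μ K) * b ^ 5 * Real.log N ≤ ε ^ 2 * N)
    (τ δ χ : ℝ)
    (hτ : τ = μ 1 / μ K)
    (hδ : δ = μ K * ε / (6 * μ 1 * b ^ 2))
    (hχ : χ = 96 * τ * b ^ 3 * Real.log N)
    (hs0 : ∀ m ∈ Finset.Icc 1 K, 0 ≤ s m)
    (hsα : ∀ m ∈ Finset.Icc 1 (K - 1), s m ≤ α m)
    (hs1 : ∑ m ∈ Finset.Icc 1 (K - 1), α m - (τ * δ + χ / (ε * N)) ≤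
        ∑ m ∈ Finset.Icc 1 (K - 1), s m)
    (hsK : CK + 3 * τ ^ 2 * δ - χ / (ε * N) ≤ s K) :
    lam + μ 1 * δ ≤ ∑ m ∈ Finset.Icc 1 K, μ m * s m := by
  have hμ_le : ∀ m ∈ Set.Icc 1 K, μ m ≤ μ 1 := fun m hm ↦
    antitoneOn_Icc_of_add_one_le hμdec ⟨le_rfl, hK⟩ hm hm.1
  have hμ_fast : ∀ m ∈ Finset.Icc 1 (K - 1), μ m ≤ μ 1 := fun m hm ↦
    hμ_le m (Set.Icc_subset_Icc_right (K.sub_le 1) (Finset.mem_Icc.mp hm))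
  have hbuf_χ : 12 * b ^ 2 * χ ≤ ε ^ 2 * N := by rw [hχ, hτ]; linarith
  rw [hlam, ← sum_Icc_sub_one_add_eq_sum_Icc _ (Nat.one_le_iff_ne_zero.mp hK) hK]
  exact stmt_10_general hμ_fast hμK (hμ_le K ⟨hK, le_rfl⟩) hε (zero_lt_one.trans_le hb).ne'
    (Nat.cast_pos.mpr hN) hbuf_χ hτ hδ hsα hs1 hsK
end
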